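/- arXiv:2108.00931 — 2 statements merged into one kernel-verified Lean document; each statement's English description precedes it below -/
import Mathlib

section
/- Let φ be an n-qubit stabilizer state and let P be an n-qubit Pauli string that commutes with every matrix A ∈ Pauli_n satisfying Aφ = φ. Then Pφ = φ or Pφ = −φ. -/
open Matrix

noncomputable section

/-- The single-qubit Pauli matrices. -/
def pauliI : Matrix (Fin 2) (Fin 2) ℂ := 1
def pauliX : Matrix (Fin 2) (Fin 2) ℂ := !![0, 1; 1, 0]
def pauliY : Matrix (Fin 2) (Fin 2) ℂ := !![0, -Complex.I; Complex.I, 0]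
def pauliZ : Matrix (Fin 2) (Fin 2) ℂ := !![1, 0; 0, -1]

/-- Kronecker product of a `2 × 2` matrix (most significant qubit) with a
`2^m × 2^m` matrix, indexed by `Fin (2^(m+1))`. -/
def kron {m : ℕ} (A : Matrix (Fin 2) (Fin 2) ℂ) (B : Matrix (Fin (2 ^ m)) (Fin (2 ^ m)) ℂ) :
    Matrix (Fin (2 ^ (m + 1))) (Fin (2 ^ (m + 1))) ℂ := fun i j =>
  A (if (i : ℕ) < 2 ^ m then 0 else 1) (if (j : ℕ) < 2 ^ m then 0 else 1) *
    B ⟨(i : ℕ) % 2 ^ m, Nat.mod_lt _ (pow_pos (by norm_num) m)⟩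
      ⟨(j : ℕ) % 2 ^ m, Nat.mod_lt _ (pow_pos (by norm_num) m)⟩

/-- `IsPauliString n M` holds iff `M` is a Kronecker product of `n` single-qubit
Pauli matrices. -/
def IsPauliString : (n : ℕ) → Matrix (Fin (2 ^ n)) (Fin (2 ^ n)) ℂ → Prop
  | 0, M => M = 1
  | n + 1, M => ∃ Q ∈ ({pauliI, pauliX, pauliY, pauliZ} : Set (Matrix (Fin 2) (Fin 2) ℂ)),
      ∃ B, IsPauliString n B ∧ M = kron Q B

/-- An `n`-qubit Pauli LIM: a nonzero scalar multiple of an `n`-qubit Pauli string. -/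
def IsPauliLIM (n : ℕ) (A : Matrix (Fin (2 ^ n)) (Fin (2 ^ n)) ℂ) : Prop :=
  ∃ (c : ℂ) (P : Matrix (Fin (2 ^ n)) (Fin (2 ^ n)) ℂ),
    c ≠ 0 ∧ IsPauliString n P ∧ A = c • P

/-- The stabilizer set of a vector: all `n`-qubit Pauli LIMs fixing `φ`. -/
def PauliStab {n : ℕ} (φ : Fin (2 ^ n) → ℂ) : Set (Matrix (Fin (2 ^ n)) (Fin (2 ^ n)) ℂ) :=
  {A | IsPauliLIM n A ∧ A.mulVec φ = φ}

/-- Two vectors are Pauli-isomorphic if some Pauli LIM maps one to the other. -/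
def PauliIso {n : ℕ} (φ ψ : Fin (2 ^ n) → ℂ) : Prop :=
  ∃ A, IsPauliLIM n A ∧ A.mulVec φ = ψ

/-- Membership in the `n`-qubit Pauli group: `i^k · P` with `P` a Pauli string. -/
def InPauliGroup (n : ℕ) (A : Matrix (Fin (2 ^ n)) (Fin (2 ^ n)) ℂ) : Prop :=
  ∃ (k : Fin 4) (P : Matrix (Fin (2 ^ n)) (Fin (2 ^ n)) ℂ),
    IsPauliString n P ∧ A = (Complex.I ^ (k : ℕ)) • P

/-- The vector `|0⟩⊗φ₀ + |1⟩⊗φ₁`: first `2^m` coordinates are `φ₀`, last are `φ₁`. -/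
def dirac {m : ℕ} (φ₀ φ₁ : Fin (2 ^ m) → ℂ) : Fin (2 ^ (m + 1)) → ℂ := fun i =>
  if h : (i : ℕ) < 2 ^ m then φ₀ ⟨i, h⟩
  else φ₁ ⟨(i : ℕ) - 2 ^ m, by
    have h1 := i.isLt
    have h2 : (2 : ℕ) ^ (m + 1) = 2 ^ m + 2 ^ m := by rw [pow_succ]; omega
    omega⟩

/-- An `n`-qubit stabilizer state: a unit vector stabilized by exactly `2^n`
elements of the Pauli group. -/
def IsStabilizerState (n : ℕ) (φ : Fin (2 ^ n) → ℂ) : Prop :=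
  (∑ i, Complex.normSq (φ i)) = 1 ∧
    Set.ncard {A : Matrix (Fin (2 ^ n)) (Fin (2 ^ n)) ℂ |
      InPauliGroup n A ∧ A.mulVec φ = φ} = 2 ^ n

/-- The standard Hermitian inner product on `ℂ^N`. -/
def hinner {N : ℕ} (φ ψ : Fin N → ℂ) : ℂ :=
  ∑ i, (starRingEnd ℂ) (φ i) * ψ i



/-- `Z^{a_m} ⊗ ⋯ ⊗ Z^{a_1}` (the `j`-th tensor factor is `Z` iff `a j = true`). -/
def zString : (m : ℕ) → (Fin m → Bool) → Matrix (Fin (2 ^ m)) (Fin (2 ^ m)) ℂ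
  | 0, _ => 1
  | m + 1, a => kron (if a (Fin.last m) then pauliZ else 1) (zString m (fun j => a j.castSucc))

open Classical in
/-- Number of edges of `G` with both endpoints in the set of vertices
`j` with `x.testBit j = true`. -/
def edgeCount {n : ℕ} (G : SimpleGraph (Fin n)) (x : ℕ) : ℕ :=
  (Finset.univ.filter (fun p : Fin n × Fin n =>
    p.1 < p.2 ∧ G.Adj p.1 p.2 ∧ x.testBit p.1.val = true ∧ x.testBit p.2.val = true)).card

/-- The graph state of a simple graph on vertices `{0, …, n-1}`; vertex `j`
corresponds to the `j`-th bit of the basis-state index. -/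
def graphState {n : ℕ} (G : SimpleGraph (Fin n)) : Fin (2 ^ n) → ℂ :=
  fun x => (-1 : ℂ) ^ edgeCount G (x : ℕ) / Real.sqrt (2 ^ n)

/-- The subfunction of `f` of order `ℓ` obtained by fixing the first `ℓ`
arguments to `a`. -/
def subfun {N : ℕ} (f : (Fin N → Bool) → ℂ) (ℓ : ℕ) (a : Fin ℓ → Bool) :
    (Fin (N - ℓ) → Bool) → ℂ := fun x =>
  f (fun i => if h : (i : ℕ) < ℓ then a ⟨i, h⟩
      else x ⟨(i : ℕ) - ℓ, by have := i.isLt; omega⟩)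

/-- A strong matching: a set of pairwise vertex-disjoint edges of `G` such that
every edge of `G` with both endpoints among the matched vertices is in `M`. -/
def IsStrongMatching {V : Type*} (G : SimpleGraph V) (M : Set (Sym2 V)) : Prop :=
  M ⊆ G.edgeSet ∧
  (∀ e₁ ∈ M, ∀ e₂ ∈ M, e₁ ≠ e₂ → ∀ v, v ∈ e₁ → v ∉ e₂) ∧
  (∀ e ∈ G.edgeSet, (∀ v ∈ e, ∃ e' ∈ M, v ∈ e') → e ∈ M)

/-- An `(S,T)`-strong matching: a strong matching each of whose edges has one
endpoint in `S` and the other in `T`. -/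
def IsSTStrongMatching {V : Type*} (G : SimpleGraph V) (S T : Set V) (M : Set (Sym2 V)) : Prop :=
  IsStrongMatching G M ∧ ∀ e ∈ M, ∃ u ∈ S, ∃ w ∈ T, e = s(u, w)

/-- The `n × n` grid graph. -/
def gridGraph (n : ℕ) : SimpleGraph (Fin n × Fin n) :=
  SimpleGraph.fromRel (fun u v =>
    (u.1 = v.1 ∧ (u.2 : ℕ) + 1 = (v.2 : ℕ)) ∨ (u.2 = v.2 ∧ (u.1 : ℕ) + 1 = (v.1 : ℕ)))

/-- The amplitude function of the graph state of `G`, on assignments `V → Bool`. -/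
def ampGraphState {V : Type*} [Fintype V] (G : SimpleGraph V) (x : V → Bool) : ℂ :=
  (-1 : ℂ) ^ Set.ncard {e ∈ G.edgeSet | ∀ v ∈ e, x v = true} / Real.sqrt (2 ^ Fintype.card V)

open Classical in
/-- The coset state of `C ⊆ {0,…,2^n − 1}`: the uniform superposition over `C`. -/
def cosetState (n : ℕ) (C : Set ℕ) : Fin (2 ^ n) → ℂ :=
  fun x => if (x : ℕ) ∈ C then 1 / Real.sqrt (C.ncard) else 0


/-- `X^{a_m} ⊗ ⋯ ⊗ X^{a_1}` (the `j`-th tensor factor is `X` iff `a j = true`). -/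
def xString : (m : ℕ) → (Fin m → Bool) → Matrix (Fin (2 ^ m)) (Fin (2 ^ m)) ℂ
  | 0, _ => 1
  | m + 1, a => kron (if a (Fin.last m) then pauliX else 1) (xString m (fun j => a j.castSucc))

/-!
The stabilizers of `φ` are unitaries that are pairwise orthogonal for the trace inner product, and
each of them has inner product `1` with the projector `φφᴴ`. There are exactly `2 ^ n` of them, so
Bessel's inequality for `φφᴴ` is an equality, which means that `φφᴴ` is their average. Hence a
matrix `P` commuting with all stabilizers commutes with `φφᴴ`, so that `φ` is an eigenvector of `P`;
if `P * P = 1`, the eigenvalue is `±1`.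
-/

section RankOneProjector

variable {m n R : Type*} [Fintype m] [Fintype n]

theorem mulVec_eq_or_eq_neg_of_mul_self_eq_one [CommRing R] [NoZeroDivisors R] [DecidableEq n]
    {P : Matrix n n R} {v : n → R} {c : R} (hP : P * P = 1) (hv : P *ᵥ v = c • v) :
    P *ᵥ v = v ∨ P *ᵥ v = -v := by
  have hcv : (c * c - 1) • v = 0 := by
    have hPPv : P *ᵥ (P *ᵥ v) = v := by rw [mulVec_mulVec, hP, one_mulVec]
    rw [hv, mulVec_smul, hv, smul_smul, ← sub_eq_zero] at hPPv
    rwa [sub_smul, one_smul]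
  rcases smul_eq_zero.mp hcv with hc | rfl
  · rcases mul_self_eq_one_iff.mp (sub_eq_zero.mp hc) with rfl | rfl
    · exact .inl (hv.trans (one_smul R v))
    · exact .inr (hv.trans (neg_one_smul R v))
  · exact .inl (mulVec_zero P)

theorem mulVec_eq_smul_of_commute_vecMulVec_star [CommSemiring R] [Star R] {P : Matrix n n R}
    {v : n → R}
    (hv : star v ⬝ᵥ v = 1) (hP : Commute (vecMulVec v (star v)) P) :
    P *ᵥ v = (star v ⬝ᵥ P *ᵥ v) • v :=
  calc P *ᵥ v = P *ᵥ (vecMulVec v (star v) *ᵥ v) := by simp [vecMulVec_mulVec, hv]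
    _ = vecMulVec v (star v) *ᵥ (P *ᵥ v) := by rw [mulVec_mulVec, mulVec_mulVec, hP.eq]
    _ = (star v ⬝ᵥ P *ᵥ v) • v := by rw [vecMulVec_mulVec, op_smul_eq_smul]

theorem trace_sum_mul_conjTranspose_sum [NonUnitalSemiring R] [StarRing R]
    {s : Finset (Matrix m n R)}
    (horth : (s : Set (Matrix m n R)).Pairwise fun A B ↦ (A * Bᴴ).trace = 0) :
    ((∑ A ∈ s, A) * (∑ A ∈ s, A)ᴴ).trace = ∑ A ∈ s, (A * Aᴴ).trace := by
  rw [Matrix.sum_mul, trace_sum]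
  refine Finset.sum_congr rfl fun A hA ↦ ?_
  rw [conjTranspose_sum, Matrix.mul_sum, trace_sum]
  exact Finset.sum_eq_single_of_mem A hA fun B hB hBA ↦ horth hA hB hBA.symm

theorem sum_eq_card_smul_vecMulVec_star [CommRing R] [NoZeroDivisors R] [PartialOrder R]
    [StarRing R] [StarOrderedRing R] {s : Finset (Matrix n n R)} {v : n → R}
    (horth : (s : Set (Matrix n n R)).Pairwise fun A B ↦ (A * Bᴴ).trace = 0)
    (htrace : ∀ A ∈ s, (A * Aᴴ).trace = s.card) (hfix : ∀ A ∈ s, A *ᵥ v = v)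
    (hv : star v ⬝ᵥ v = 1) :
    ∑ A ∈ s, A = (s.card : R) • vecMulVec v (star v) := by
  set M := ∑ A ∈ s, A with hM
  set E := vecMulVec v (star v) with hE
  have hEstar : Eᴴ = E := by rw [hE, conjTranspose_vecMulVec, star_star]
  have hEidem : E * E = E := by simp [hE, vecMulVec_mul_vecMulVec, hv]
  have hME : M * E = (s.card : R) • E := by
    have hAE : ∀ A ∈ s, A * E = E := fun A hA ↦ by rw [hE, mul_vecMulVec, hfix A hA]
    rw [hM, Finset.sum_mul, Finset.sum_congr rfl hAE, Finset.sum_const, Nat.cast_smul_eq_nsmul]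
  have hEM : E * Mᴴ = (s.card : R) • E := by
    simpa [hEstar] using congrArg conjTranspose hME
  have htraceM : (M * Mᴴ).trace = (s.card : R) * s.card := by
    rw [trace_sum_mul_conjTranspose_sum horth, Finset.sum_congr rfl htrace, Finset.sum_const,
      nsmul_eq_mul]
  have htraceE : E.trace = 1 := by rw [hE, trace_vecMulVec, dotProduct_comm, hv]
  rw [← sub_eq_zero, ← trace_mul_conjTranspose_self_eq_zero_iff]
  calc ((M - (s.card : R) • E) * (M - (s.card : R) • E)ᴴ).trace
      = (M * Mᴴ - ((s.card : R) * s.card) • E).trace := by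
        simp [hEstar, sub_mul, mul_sub, hME, hEM, hEidem, smul_smul]
    _ = 0 := by rw [trace_sub, trace_smul, htraceM, htraceE, smul_eq_mul, mul_one, sub_self]

end RankOneProjector

section Kron

open scoped Kronecker

variable {m : ℕ}

/-- The splitting of a basis index of `m + 1` qubits into its most significant bit and the index of
the remaining `m` qubits; it identifies `kron` with Mathlib's Kronecker product. -/
def splitMostSignificant (m : ℕ) : Fin (2 ^ (m + 1)) ≃ Fin 2 × Fin (2 ^ m) :=
  (finCongr (pow_succ' 2 m)).trans finProdFinEquiv.symm

theorem splitMostSignificant_apply (i : Fin (2 ^ (m + 1))) :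
    splitMostSignificant m i =
      (if (i : ℕ) < 2 ^ m then 0 else 1, ⟨i % 2 ^ m, Nat.mod_lt _ (by positivity)⟩) := by
  refine Prod.ext (Fin.ext ?_) rfl
  change (i : ℕ) / 2 ^ m = _
  split_ifs with hi
  · exact Nat.div_eq_of_lt hi
  · exact Nat.div_eq_of_lt_le (k := 1) (by omega) (i.isLt.trans_eq (pow_succ' 2 m))

variable (A A' : Matrix (Fin 2) (Fin 2) ℂ) (B B' : Matrix (Fin (2 ^ m)) (Fin (2 ^ m)) ℂ)

theorem kron_eq_submatrix_kronecker :
    kron A B = (A ⊗ₖ B).submatrix (splitMostSignificant m) (splitMostSignificant m) := by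
  ext i j
  simp only [submatrix_apply, splitMostSignificant_apply]
  rfl

theorem kron_mul_kron : kron A B * kron A' B' = kron (A * A') (B * B') := by
  simp only [kron_eq_submatrix_kronecker, submatrix_mul_equiv, mul_kronecker_mul]

theorem kron_one_one : kron 1 (1 : Matrix (Fin (2 ^ m)) (Fin (2 ^ m)) ℂ) = 1 := by
  rw [kron_eq_submatrix_kronecker, one_kronecker_one, submatrix_one_equiv]

theorem conjTranspose_kron : (kron A B)ᴴ = kron Aᴴ Bᴴ := by
  simp only [kron_eq_submatrix_kronecker, conjTranspose_submatrix, conjTranspose_kronecker]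

theorem trace_kron : (kron A B).trace = A.trace * B.trace := by
  rw [← trace_kronecker, kron_eq_submatrix_kronecker]
  exact (splitMostSignificant m).sum_comp fun i ↦ (A ⊗ₖ B) i i

end Kron

section SingleQubit

variable {Q Q' : Matrix (Fin 2) (Fin 2) ℂ}

/-- The set of single-qubit Pauli matrices, the factors allowed in `IsPauliString`. -/
def pauliMatrices : Set (Matrix (Fin 2) (Fin 2) ℂ) := {pauliI, pauliX, pauliY, pauliZ}

theorem conjTranspose_of_mem_pauliMatrices (hQ : Q ∈ pauliMatrices) : Qᴴ = Q := by
  rcases hQ with rfl | rfl | rfl | rfl <;> ext i j <;> fin_cases i <;> fin_cases j <;>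
    simp [pauliI, pauliX, pauliY, pauliZ]

theorem mul_self_of_mem_pauliMatrices (hQ : Q ∈ pauliMatrices) : Q * Q = 1 := by
  rcases hQ with rfl | rfl | rfl | rfl <;>
    simp [pauliI, pauliX, pauliY, pauliZ, one_fin_two]

theorem trace_mul_eq_zero_of_mem_pauliMatrices (hQ : Q ∈ pauliMatrices) (hQ' : Q' ∈ pauliMatrices)
    (hne : Q ≠ Q') : (Q * Q').trace = 0 := by
  rcases hQ with rfl | rfl | rfl | rfl <;> rcases hQ' with rfl | rfl | rfl | rfl <;>
    first
    | exact absurd rfl hne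
    | simp [pauliI, pauliX, pauliY, pauliZ, trace_fin_two]

end SingleQubit

section PauliGroup

variable {n : ℕ} {A B P Q : Matrix (Fin (2 ^ n)) (Fin (2 ^ n)) ℂ} {φ : Fin (2 ^ n) → ℂ}

theorem IsPauliString.conjTranspose_eq (hP : IsPauliString n P) : Pᴴ = P := by
  induction n with
  | zero => rw [show P = 1 from hP, conjTranspose_one]
  | succ n ih =>
    obtain ⟨Q, hQ, P, hP, rfl⟩ := hP
    rw [conjTranspose_kron, conjTranspose_of_mem_pauliMatrices hQ, ih hP]

theorem IsPauliString.mul_self (hP : IsPauliString n P) : P * P = 1 := by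
  induction n with
  | zero => rw [show P = 1 from hP, mul_one]
  | succ n ih =>
    obtain ⟨Q, hQ, P, hP, rfl⟩ := hP
    rw [kron_mul_kron, mul_self_of_mem_pauliMatrices hQ, ih hP, kron_one_one]

theorem IsPauliString.trace_mul_eq_zero (hP : IsPauliString n P) (hQ : IsPauliString n Q)
    (hne : P ≠ Q) : (P * Q).trace = 0 := by
  induction n with
  | zero => exact absurd ((show P = 1 from hP).trans (show Q = 1 from hQ).symm) hne
  | succ n ih =>
    obtain ⟨P₁, hP₁, P, hP, rfl⟩ := hP
    obtain ⟨Q₁, hQ₁, Q, hQ, rfl⟩ := hQ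
    rw [kron_mul_kron, trace_kron]
    by_cases h₁ : P₁ = Q₁
    · rw [ih hP hQ fun h ↦ hne (by rw [h₁, h]), mul_zero]
    · rw [trace_mul_eq_zero_of_mem_pauliMatrices hP₁ hQ₁ h₁, zero_mul]

theorem InPauliGroup.mul_conjTranspose_self (hA : InPauliGroup n A) : A * Aᴴ = 1 := by
  obtain ⟨k, P, hP, rfl⟩ := hA
  have hphase : Complex.I ^ (k : ℕ) * star (Complex.I ^ (k : ℕ)) = 1 := by
    simp [← mul_pow]
  rw [conjTranspose_smul, smul_mul_smul_comm, hphase, hP.conjTranspose_eq, hP.mul_self, one_smul]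

theorem InPauliGroup.trace_mul_conjTranspose_eq_zero (hA : InPauliGroup n A)
    (hB : InPauliGroup n B) (hφ : φ ≠ 0) (hAφ : A *ᵥ φ = φ) (hBφ : B *ᵥ φ = φ) (hne : A ≠ B) :
    (A * Bᴴ).trace = 0 := by
  obtain ⟨k, P, hP, rfl⟩ := hA
  obtain ⟨l, Q, hQ, rfl⟩ := hB
  have hPQ : P ≠ Q := by
    rintro rfl
    have hPφ : P *ᵥ φ ≠ 0 := fun h ↦ hφ (by rw [← hAφ, smul_mulVec, h, smul_zero])
    rw [smul_mulVec] at hAφ hBφ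
    exact hne (by rw [smul_left_injective ℂ hPφ (hAφ.trans hBφ.symm)])
  rw [conjTranspose_smul, hQ.conjTranspose_eq, smul_mul_smul_comm, trace_smul,
    hP.trace_mul_eq_zero hQ hPQ, smul_zero]

theorem IsStabilizerState.star_dotProduct_self (hφ : IsStabilizerState n φ) :
    star φ ⬝ᵥ φ = 1 := by
  simpa [dotProduct, Complex.normSq_eq_conj_mul_self] using congrArg Complex.ofReal hφ.1

open scoped ComplexOrder in
theorem IsStabilizerState.sum_stabilizers (hφ : IsStabilizerState n φ)
    {s : Finset (Matrix (Fin (2 ^ n)) (Fin (2 ^ n)) ℂ)}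
    (hs : (s : Set (Matrix (Fin (2 ^ n)) (Fin (2 ^ n)) ℂ)) =
      {A | InPauliGroup n A ∧ A *ᵥ φ = φ}) :
    ∑ A ∈ s, A = (2 ^ n : ℂ) • vecMulVec φ (star φ) := by
  have hmem : ∀ {A}, A ∈ s → InPauliGroup n A ∧ A *ᵥ φ = φ := fun hA ↦
    (Set.ext_iff.mp hs _).mp hA
  have hcard : s.card = 2 ^ n := by rw [← Set.ncard_coe_finset, hs, hφ.2]
  have hφ₀ : φ ≠ 0 := by
    rintro rfl
    simpa using hφ.star_dotProduct_self
  have hsum := sum_eq_card_smul_vecMulVec_star (s := s) (v := φ)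
    (fun A hA B hB ↦ (hmem hA).1.trace_mul_conjTranspose_eq_zero (hmem hB).1 hφ₀
      (hmem hA).2 (hmem hB).2)
    (fun A hA ↦ by simp [(hmem hA).1.mul_conjTranspose_self, hcard])
    (fun A hA ↦ (hmem hA).2) hφ.star_dotProduct_self
  rwa [hcard, Nat.cast_pow, Nat.cast_ofNat] at hsum

theorem IsStabilizerState.commute_vecMulVec_star (hφ : IsStabilizerState n φ)
    (hcomm : ∀ A : Matrix (Fin (2 ^ n)) (Fin (2 ^ n)) ℂ,
      InPauliGroup n A → A *ᵥ φ = φ → A * P = P * A) :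
    Commute (vecMulVec φ (star φ)) P := by
  have hfin : {A | InPauliGroup n A ∧ A *ᵥ φ = φ}.Finite :=
    Set.finite_of_ncard_ne_zero (by rw [hφ.2]; positivity)
  have hsum : Commute (∑ A ∈ hfin.toFinset, A) P :=
    Finset.sum_induction _ (Commute · P) (fun _ _ ↦ Commute.add_left) (Commute.zero_left P)
      fun A hA ↦ hcomm A (hfin.mem_toFinset.mp hA).1 (hfin.mem_toFinset.mp hA).2
  rw [hφ.sum_stabilizers hfin.coe_toFinset] at hsum
  exact (Commute.smul_left_iff₀ (pow_ne_zero n two_ne_zero)).mp hsum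

end PauliGroup

theorem commuting_pauli_is_pm_stabilizer_general (n : ℕ) (φ : Fin (2 ^ n) → ℂ)
    (hφ : IsStabilizerState n φ)
    (P : Matrix (Fin (2 ^ n)) (Fin (2 ^ n)) ℂ) (hP : P * P = 1)
    (hcomm : ∀ A : Matrix (Fin (2 ^ n)) (Fin (2 ^ n)) ℂ,
      InPauliGroup n A → A.mulVec φ = φ → A * P = P * A) :
    P.mulVec φ = φ ∨ P.mulVec φ = -φ :=
  mulVec_eq_or_eq_neg_of_mul_self_eq_one hP <|
    mulVec_eq_smul_of_commute_vecMulVec_star hφ.star_dotProduct_self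
      (hφ.commute_vecMulVec_star hcomm)

/-- A Pauli string commuting with all Pauli-group stabilizers of a stabilizer state `φ`
satisfies `Pφ = ±φ`. -/
theorem commuting_pauli_is_pm_stabilizer (n : ℕ) (φ : Fin (2 ^ n) → ℂ)
    (hφ : IsStabilizerState n φ)
    (P : Matrix (Fin (2 ^ n)) (Fin (2 ^ n)) ℂ) (hP : IsPauliString n P)
    (hcomm : ∀ A : Matrix (Fin (2 ^ n)) (Fin (2 ^ n)) ℂ,
      InPauliGroup n A → A.mulVec φ = φ → A * P = P * A) :
    P.mulVec φ = φ ∨ P.mulVec φ = -φ := by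
  exact commuting_pauli_is_pm_stabilizer_general n φ hφ P hP.mul_self hcomm

end
end

section
/- Let n ≥ 1 and N = n². For every bijection σ from {1,…,N} to the vertex set of the n×n grid graph, define g : {0,1}^N → ℂ by g(x) = (−1)^{m(x)}, where m(x) is the number of grid edges {u, v} with x_{σ^{-1}(u)} = x_{σ^{-1}(v)} = 1. Then g has at least 2^{⌊n/12⌋} pairwise distinct subfunctions of order ⌊N/2⌋. -/
open Matrix

noncomputable section

/-!
Split the vertices into the set `S` of those whose variables are fixed and its complement. If an
edge `uw` of a strong matching across the split has `u ∈ S`, then `u` is the only neighbour of `w`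
among the left endpoints, so switching on `w` flips the sign exactly when `u` is on. The
`2 ^ |M|` assignments supported on the left endpoints of a matching `M` therefore yield distinct
subfunctions.

In the grid, a row or column that meets both `S` and `Sᶜ` contains an edge across the split. If
some column lies on one side of the split, every row meets that side, so the rows that meet the
other side are crossed, and there are many of them because the other side is large. Otherwise every
column is crossed. Crossed lines of the same parity are pairwise non-adjacent, so one edge from each
of them gives a strong matching; for the better parity it uses at least half of the crossed lines.
-/

section GraphSign

variable {V : Type*} (G : SimpleGraph V)

/-- The amplitude of the graph state of `G` at the indicator function of `X`, without the
normalization factor. Taking a set as argument keeps the variable order out of the sign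
computations. -/
def graphSign (X : Set V) : ℂ :=
  (-1) ^ Set.ncard {e ∈ G.edgeSet | ∀ v ∈ e, v ∈ X}

lemma graphSign_ne_zero (X : Set V) : graphSign G X ≠ 0 :=
  pow_ne_zero _ (neg_ne_zero.2 one_ne_zero)

lemma edges_within_insert (w : V) (X : Set V) :
    {e ∈ G.edgeSet | ∀ v ∈ e, v ∈ insert w X} =
      {e ∈ G.edgeSet | ∀ v ∈ e, v ∈ X} ∪ (fun v ↦ s(w, v)) '' (G.neighborSet w ∩ X) := by
  ext e
  induction e with | _ a b
  simp only [Set.mem_ofPred_eq, SimpleGraph.mem_edgeSet, Sym2.mem_iff, Set.mem_insert_iff,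
    forall_eq_or_imp, forall_eq, Set.mem_union, Set.mem_image, Set.mem_inter_iff,
    SimpleGraph.mem_neighborSet, Sym2.eq_iff]
  constructor
  · rintro ⟨hab, rfl | ha, rfl | hb⟩
    · exact absurd rfl hab.ne
    · exact .inr ⟨b, ⟨hab, hb⟩, .inl ⟨rfl, rfl⟩⟩
    · exact .inr ⟨a, ⟨hab.symm, ha⟩, .inr ⟨rfl, rfl⟩⟩
    · exact .inl ⟨hab, ha, hb⟩
  · rintro (⟨hab, ha, hb⟩ | ⟨v, ⟨hv, hvX⟩, ⟨rfl, rfl⟩ | ⟨rfl, rfl⟩⟩)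
    · exact ⟨hab, .inr ha, .inr hb⟩
    · exact ⟨hv, .inl rfl, .inr hvX⟩
    · exact ⟨hv.symm, .inr hvX, .inl rfl⟩

lemma graphSign_insert [Finite V] {w : V} {X : Set V} (hw : w ∉ X) :
    graphSign G (insert w X) = graphSign G X * (-1) ^ (G.neighborSet w ∩ X).ncard := by
  have hdisj : Disjoint {e ∈ G.edgeSet | ∀ v ∈ e, v ∈ X}
      ((fun v ↦ s(w, v)) '' (G.neighborSet w ∩ X)) := by
    rw [Set.disjoint_right]
    rintro _ ⟨v, -, rfl⟩ ⟨-, h⟩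
    exact hw (h w (Sym2.mem_mk_left w v))
  rw [graphSign, edges_within_insert, Set.ncard_union_eq hdisj,
    Set.ncard_image_of_injective _ fun _ _ ↦ Sym2.congr_right.1, pow_add, graphSign]

variable {G} in
open Classical in
lemma graphSign_insert_of_matching [Finite V] {ι : Type*} {u w : ι → V}
    (hadj : ∀ i j, G.Adj (u i) (w j) ↔ i = j) {A : Set ι} {i : ι} (hw : w i ∉ u '' A) :
    graphSign G (insert (w i) (u '' A)) = graphSign G (u '' A) * if i ∈ A then -1 else 1 := by
  have hneighbors : G.neighborSet (w i) ∩ u '' A = if i ∈ A then {u i} else ∅ := by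
    ext v
    simp only [Set.mem_inter_iff, SimpleGraph.mem_neighborSet, Set.mem_image]
    split_ifs with hi
    · constructor
      · rintro ⟨h, j, -, rfl⟩
        rw [(hadj j i).1 h.symm, Set.mem_singleton_iff]
      · rintro rfl
        exact ⟨((hadj i i).2 rfl).symm, i, hi, rfl⟩
    · simp only [Set.mem_empty_iff_false, iff_false]
      rintro ⟨h, j, hj, rfl⟩
      exact hi ((hadj j i).1 h.symm ▸ hj)
  rw [graphSign_insert G hw, hneighbors]
  split_ifs <;> simp

end GraphSign

section Subfunctions

variable {V : Type*} {N ℓ : ℕ} (σ : Fin N ≃ V)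

open Classical in
lemma subfun_indicator (φ : Set V → ℂ) {X Y : Set V}
    (hX : X ⊆ {v | (σ.symm v : ℕ) < ℓ}) (hY : Y ⊆ {v | (σ.symm v : ℕ) < ℓ}ᶜ) :
    subfun (fun x ↦ φ {v | x (σ.symm v) = true}) ℓ
        (fun k ↦ decide (∃ v ∈ X, (σ.symm v : ℕ) = k))
        (fun k ↦ decide (∃ v ∈ Y, (σ.symm v : ℕ) = k + ℓ)) = φ (X ∪ Y) := by
  change φ {v | _} = _
  congr 1
  ext v
  by_cases hv : (σ.symm v : ℕ) < ℓ
  · have hvY : v ∉ Y := fun h ↦ hY h hv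
    simp [hv, hvY, Fin.val_inj]
  · have hvX : v ∉ X := fun h ↦ hv (hX h)
    simp [hv, hvX, Fin.val_inj, Nat.sub_add_cancel (not_lt.1 hv)]

theorem card_le_ncard_range_subfun {α : Type*} (φ : Set V → ℂ) (X : α → Set V)
    (hX : ∀ a, X a ⊆ {v | (σ.symm v : ℕ) < ℓ})
    (hsep : ∀ a b, (∀ Y ⊆ {v | (σ.symm v : ℕ) < ℓ}ᶜ, φ (X a ∪ Y) = φ (X b ∪ Y)) → a = b) :
    Nat.card α ≤
      (Set.range (subfun (fun x ↦ φ {v | x (σ.symm v) = true}) ℓ)).ncard := by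
  classical
  let F (a : α) := subfun (fun x ↦ φ {v | x (σ.symm v) = true}) ℓ
    (fun k ↦ decide (∃ v ∈ X a, (σ.symm v : ℕ) = k))
  have hF : Function.Injective F := fun a b hab ↦ hsep a b fun Y hY ↦ by
    rw [← subfun_indicator σ φ (hX a) hY, ← subfun_indicator σ φ (hX b) hY]
    exact congrFun hab _
  rw [← Set.ncard_range_of_injective hF]
  exact Set.ncard_le_ncard (Set.range_subset_iff.2 fun a ↦ Set.mem_range_self _)

theorem two_pow_card_le_ncard_range_subfun_graphSign {G : SimpleGraph V} {ι : Type*} {u w : ι → V}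
    (hu : ∀ i, (σ.symm (u i) : ℕ) < ℓ) (hw : ∀ i, ¬ (σ.symm (w i) : ℕ) < ℓ)
    (hadj : ∀ i j, G.Adj (u i) (w j) ↔ i = j) :
    2 ^ Nat.card ι ≤
      (Set.range (subfun (fun x ↦ graphSign G {v | x (σ.symm v) = true}) ℓ)).ncard := by
  have : Finite V := .of_equiv _ σ
  have : Finite ι := .of_injective u fun i j hij ↦ (hadj i j).1 (hij ▸ (hadj j j).2 rfl)
  have hcard : Nat.card (Set ι) = 2 ^ Nat.card ι := by
    have := Fintype.ofFinite ι
    simp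
  rw [← hcard]
  have huS (A : Set ι) : u '' A ⊆ {v | (σ.symm v : ℕ) < ℓ} := Set.image_subset_iff.2 fun i _ ↦ hu i
  refine card_le_ncard_range_subfun σ (graphSign G) (fun A ↦ u '' A) huS fun A B hAB ↦ ?_
  have hsign : graphSign G (u '' A) = graphSign G (u '' B) := by
    simpa using hAB ∅ (Set.empty_subset _)
  ext i
  have hflip := hAB {w i} (Set.singleton_subset_iff.2 (hw i))
  rw [Set.union_singleton, Set.union_singleton,
    graphSign_insert_of_matching hadj fun h ↦ hw i (huS A h),
    graphSign_insert_of_matching hadj fun h ↦ hw i (huS B h), hsign,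
    mul_right_inj' (graphSign_ne_zero G _)] at hflip
  grind

end Subfunctions

section StrongMatching

variable {V : Type*} {K : SimpleGraph V} {S T : Set V}

lemma IsSTStrongMatching.exists_endpoints {M : Set (Sym2 V)} (hM : IsSTStrongMatching K S T M) :
    ∃ u w : M → V, (∀ e, u e ∈ S) ∧ (∀ e, w e ∈ T) ∧ ∀ e e', K.Adj (u e) (w e') ↔ e = e' := by
  obtain ⟨⟨hsub, hdisj, hstrong⟩, hST⟩ := hM
  choose u hu w hw huw using fun e : M ↦ hST e e.2
  have hmem_u (e : M) : u e ∈ (e : Sym2 V) := huw e ▸ Sym2.mem_mk_left _ _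
  have hmem_w (e : M) : w e ∈ (e : Sym2 V) := huw e ▸ Sym2.mem_mk_right _ _
  have heq {e e' : Sym2 V} (he : e ∈ M) (he' : e' ∈ M) {v : V} (hv : v ∈ e) (hv' : v ∈ e') :
      e = e' :=
    by_contra fun hne ↦ hdisj e he e' he' hne v hv hv'
  refine ⟨u, w, hu, hw, fun e e' ↦ ⟨fun h ↦ ?_, ?_⟩⟩
  · have hcross : s(u e, w e') ∈ M := by
      refine hstrong _ h fun v hv ↦ ?_
      obtain rfl | rfl := Sym2.mem_iff.1 hv
      exacts [⟨e, e.2, hmem_u e⟩, ⟨e', e'.2, hmem_w e'⟩]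
    apply Subtype.ext
    exact (heq e.2 hcross (hmem_u e) (Sym2.mem_mk_left _ _)).trans
      (heq hcross e'.2 (Sym2.mem_mk_right _ _) (hmem_w e'))
  · rintro rfl
    rw [← SimpleGraph.mem_edgeSet, ← huw e]
    exact hsub e.2

theorem IsSTStrongMatching.two_pow_ncard_le_ncard_range_subfun {N ℓ : ℕ} (σ : Fin N ≃ V)
    {M : Set (Sym2 V)}
    (hM : IsSTStrongMatching K {v | (σ.symm v : ℕ) < ℓ} {v | (σ.symm v : ℕ) < ℓ}ᶜ M) :
    2 ^ M.ncard ≤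
      (Set.range (subfun (fun x ↦ graphSign K {v | x (σ.symm v) = true}) ℓ)).ncard := by
  obtain ⟨u, w, hu, hw, hadj⟩ := hM.exists_endpoints
  exact two_pow_card_le_ncard_range_subfun_graphSign σ hu hw hadj

lemma exists_isIndepSet_subset_of_colorable {α : Type*} {G : SimpleGraph α} {c : ℕ}
    (hG : G.Colorable c) (R : Set α) :
    ∃ I ⊆ R, G.IsIndepSet I ∧ R.ncard ≤ c * I.ncard := by
  obtain ⟨C⟩ := hG
  obtain rfl | ⟨x, -⟩ := R.eq_empty_or_nonempty
  · exact ⟨∅, subset_rfl, Set.pairwise_empty _, by simp⟩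
  have : Nonempty (Fin c) := ⟨C x⟩
  obtain ⟨i, hi⟩ := Finite.exists_max fun i ↦ (R ∩ C.colorClass i).ncard
  refine ⟨R ∩ C.colorClass i, Set.inter_subset_left,
    (C.isIndepSet_colorClass i).mono Set.inter_subset_right, ?_⟩
  calc R.ncard = (⋃ j ∈ Finset.univ, R ∩ C.colorClass j).ncard := by
        congr 1
        ext y
        simp [SimpleGraph.Coloring.colorClass]
    _ ≤ ∑ j, (R ∩ C.colorClass j).ncard := Finset.set_ncard_biUnion_le _ _
    _ ≤ c * (R ∩ C.colorClass i).ncard := by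
        simpa using Finset.sum_le_card_nsmul Finset.univ _ _ fun j _ ↦ hi j

lemma exists_isSTStrongMatching_of_isIndepSet {α : Type*} {G : SimpleGraph α} {f : V → α}
    (hf : ∀ u v, K.Adj u v → f u = f v ∨ G.Adj (f u) (f v)) {I : Set α} (hI : G.IsIndepSet I)
    (hcross : ∀ a ∈ I, ∃ u ∈ S, ∃ w ∈ T, K.Adj u w ∧ f u = a ∧ f w = a) :
    ∃ M, IsSTStrongMatching K S T M ∧ M.ncard = I.ncard := by
  choose u hu w hw hadj hfu hfw using fun a : I ↦ hcross a a.2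
  have hf_mem {a : I} {v : V} (hv : v ∈ s(u a, w a)) : f v = a := by
    obtain rfl | rfl := Sym2.mem_iff.1 hv
    exacts [hfu a, hfw a]
  have hinj : Function.Injective fun a ↦ s(u a, w a) := fun a b (hab : s(u a, w a) = s(u b, w b)) ↦
    Subtype.ext <| (hfu a).symm.trans (hf_mem (hab ▸ Sym2.mem_mk_left (u a) (w a)))
  refine ⟨Set.range fun a ↦ s(u a, w a), ⟨⟨?_, ?_, ?_⟩, ?_⟩, Set.ncard_range_of_injective hinj⟩
  · rintro _ ⟨a, rfl⟩
    exact hadj a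
  · rintro _ ⟨a, rfl⟩ _ ⟨b, rfl⟩ hne v hva hvb
    obtain rfl : a = b := Subtype.ext ((hf_mem hva).symm.trans (hf_mem hvb))
    exact hne rfl
  · intro e he hcov
    induction e with | _ x y
    obtain ⟨_, ⟨a, rfl⟩, hxa⟩ := hcov x (Sym2.mem_mk_left _ _)
    obtain ⟨_, ⟨b, rfl⟩, hyb⟩ := hcov y (Sym2.mem_mk_right _ _)
    obtain rfl : a = b := by
      obtain hxy | hxy := hf x y he <;> rw [hf_mem hxa, hf_mem hyb] at hxy
      · exact Subtype.ext hxy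
      · exact absurd hxy (hI a.2 b.2 hxy.ne)
    exact ⟨a, (Sym2.mem_and_mem_iff he.ne).1 ⟨hxa, hyb⟩⟩
  · rintro _ ⟨a, rfl⟩
    exact ⟨u a, hu a, w a, hw a, rfl⟩

lemma exists_isSTStrongMatching_of_colorable {α : Type*} {G : SimpleGraph α} {c : ℕ}
    (hG : G.Colorable c) {f : V → α} (hf : ∀ u v, K.Adj u v → f u = f v ∨ G.Adj (f u) (f v))
    {R : Set α} (hcross : ∀ a ∈ R, ∃ u ∈ S, ∃ w ∈ T, K.Adj u w ∧ f u = a ∧ f w = a) :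
    ∃ M, IsSTStrongMatching K S T M ∧ R.ncard ≤ c * M.ncard := by
  obtain ⟨I, hIR, hI, hcard⟩ := exists_isIndepSet_subset_of_colorable hG R
  obtain ⟨M, hM, hMI⟩ :=
    exists_isSTStrongMatching_of_isIndepSet hf hI fun a ha ↦ hcross a (hIR ha)
  exact ⟨M, hM, hMI ▸ hcard⟩

end StrongMatching

section BoxProd

variable {α β : Type*} {G : SimpleGraph α} {H : SimpleGraph β}

lemma exists_adj_mem_notMem_of_preconnected (hG : G.Preconnected) {A : Set α} (hA : A.Nonempty)
    (hAc : Aᶜ.Nonempty) : ∃ a ∈ A, ∃ b ∉ A, G.Adj a b := by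
  obtain ⟨x, hx⟩ := hA
  obtain ⟨y, hy⟩ := hAc
  obtain ⟨p⟩ := hG x y
  obtain ⟨d, -, hd, hd'⟩ := p.exists_boundary_dart A hx hy
  exact ⟨d.fst, hd, d.snd, hd', d.adj⟩

/-- The rows `{a} × β` of `α × β` that meet both `S` and its complement, indexed by `a`. If
the graph on `β` is connected, each of them contains an edge between `S` and its complement. -/
def mixedRows (S : Set (α × β)) : Set α :=
  {a | (∃ b, (a, b) ∈ S) ∧ ∃ b, (a, b) ∉ S}

lemma mixedRows_compl (S : Set (α × β)) : mixedRows Sᶜ = mixedRows S := by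
  ext a
  simp [mixedRows, and_comm]

lemma ncard_le_ncard_mixedRows_mul [Finite α] [Finite β] {S : Set (α × β)} {b : β}
    (hb : ∀ a, (a, b) ∉ S) : S.ncard ≤ (mixedRows S).ncard * Nat.card β := by
  rw [← Set.ncard_univ β, ← Set.ncard_prod]
  exact Set.ncard_le_ncard fun x hx ↦ ⟨⟨⟨x.2, hx⟩, b, hb x.1⟩, Set.mem_univ _⟩

lemma le_ncard_mixedRows_or_le_ncard_mixedRows_swap [Finite α] [Finite β] {S : Set (α × β)} {k : ℕ}
    (hS : k * Nat.card β ≤ S.ncard) (hSc : k * Nat.card β ≤ Sᶜ.ncard) (hk : k ≤ Nat.card β) :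
    k ≤ (mixedRows S).ncard ∨ k ≤ (mixedRows (Prod.swap ⁻¹' S)).ncard := by
  by_cases hcol : mixedRows (Prod.swap ⁻¹' S) = Set.univ
  · right
    rwa [hcol, Set.ncard_univ]
  left
  obtain ⟨b, hb⟩ := (Set.ne_univ_iff_exists_notMem _).1 hcol
  have hβ : 0 < Nat.card β := Nat.card_pos_iff.2 ⟨⟨b⟩, inferInstance⟩
  refine Nat.le_of_mul_le_mul_right ?_ hβ
  obtain hbS | hbS : (∀ a, (a, b) ∉ S) ∨ ∀ a, (a, b) ∉ Sᶜ := by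
    simpa [mixedRows, Classical.or_iff_not_imp_left] using hb
  · exact hS.trans (ncard_le_ncard_mixedRows_mul hbS)
  · exact mixedRows_compl S ▸ hSc.trans (ncard_le_ncard_mixedRows_mul hbS)

theorem exists_isSTStrongMatching_boxProd [Finite α] [Finite β] (hG : G.Preconnected)
    (hH : H.Preconnected) {c : ℕ} (hGc : G.Colorable c) (hHc : H.Colorable c) {S : Set (α × β)}
    {k : ℕ} (hS : k * Nat.card β ≤ S.ncard) (hSc : k * Nat.card β ≤ Sᶜ.ncard)
    (hk : k ≤ Nat.card β) :
    ∃ M, IsSTStrongMatching (G □ H) S Sᶜ M ∧ k ≤ c * M.ncard := by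
  obtain hrows | hcols := le_ncard_mixedRows_or_le_ncard_mixedRows_swap hS hSc hk
  · obtain ⟨M, hM, hcard⟩ := exists_isSTStrongMatching_of_colorable (K := G □ H) (S := S) (T := Sᶜ)
      (R := mixedRows S) hGc (f := Prod.fst)
      (fun x y hxy ↦ (SimpleGraph.boxProd_adj.1 hxy).symm.imp And.right And.left) fun a ha ↦ by
        obtain ⟨b, hb, b', hb', hadj⟩ := exists_adj_mem_notMem_of_preconnected hH ha.1 ha.2
        exact ⟨(a, b), hb, (a, b'), hb', SimpleGraph.boxProd_adj_right.2 hadj, rfl, rfl⟩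
    exact ⟨M, hM, hrows.trans hcard⟩
  · obtain ⟨M, hM, hcard⟩ := exists_isSTStrongMatching_of_colorable (K := G □ H) (S := S) (T := Sᶜ)
      (R := mixedRows (Prod.swap ⁻¹' S)) hHc (f := Prod.snd)
      (fun x y hxy ↦ (SimpleGraph.boxProd_adj.1 hxy).imp And.right And.left) fun b hb ↦ by
        obtain ⟨a, ha, a', ha', hadj⟩ := exists_adj_mem_notMem_of_preconnected hG hb.1 hb.2
        exact ⟨(a, b), ha, (a', b), ha', SimpleGraph.boxProd_adj_left.2 hadj, rfl, rfl⟩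
    exact ⟨M, hM, hcols.trans hcard⟩

lemma gridGraph_eq_boxProd (n : ℕ) :
    gridGraph n = SimpleGraph.pathGraph n □ SimpleGraph.pathGraph n := by
  ext u v
  simp only [gridGraph, SimpleGraph.fromRel_adj, SimpleGraph.boxProd_adj,
    SimpleGraph.pathGraph_adj, ne_eq, Prod.ext_iff, Fin.ext_iff]
  omega

end BoxProd

lemma div_two_mul_self_le_sq_div_two (n : ℕ) : n / 2 * n ≤ n ^ 2 / 2 := by
  rw [Nat.le_div_iff_mul_le two_pos]
  nlinarith [Nat.div_mul_le_self n 2]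

lemma ncard_setOf_val_symm_lt {V : Type*} {N : ℕ} (σ : Fin N ≃ V) (ℓ : ℕ) :
    {v | (σ.symm v : ℕ) < ℓ}.ncard = min N ℓ := by
  have himage : {v | (σ.symm v : ℕ) < ℓ} = σ '' {i | (i : ℕ) < ℓ} := by
    ext v
    simp [σ.image_eq_preimage_symm]
  rw [himage, Set.ncard_image_of_injective _ σ.injective, Set.ncard_eq_toFinset_card']
  simpa using Fin.card_filter_val_lt

theorem cluster_state_many_subfunctions_general {n ℓ k : ℕ} (hn : 1 ≤ n)
    (σ : Fin (n ^ 2) ≃ Fin n × Fin n) (hk : k * n ≤ ℓ) (hkℓ : k * n + ℓ ≤ n ^ 2) :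
    2 ^ ((k + 1) / 2) ≤
      (Set.range (subfun (fun x ↦ graphSign (gridGraph n) {v | x (σ.symm v) = true}) ℓ)).ncard := by
  set S : Set (Fin n × Fin n) := {v | (σ.symm v : ℕ) < ℓ}
  have hS : S.ncard = ℓ := by
    rw [ncard_setOf_val_symm_lt]
    omega
  have hSc : S.ncard + Sᶜ.ncard = n ^ 2 := by
    rw [Set.ncard_add_ncard_compl, Nat.card_prod, Nat.card_fin, sq]
  have hkn : k ≤ n := by nlinarith
  have hconn := SimpleGraph.pathGraph_preconnected n
  have hcolor := (SimpleGraph.pathGraph.bicoloring n).colorable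
  obtain ⟨M, hM, hMcard⟩ := exists_isSTStrongMatching_boxProd (S := S) (k := k) hconn hconn
    hcolor hcolor (by rw [Nat.card_fin]; omega) (by rw [Nat.card_fin]; omega)
    (by rwa [Nat.card_fin])
  rw [← gridGraph_eq_boxProd] at hM
  refine le_trans (Nat.pow_le_pow_right two_pos ?_) (hM.two_pow_ncard_le_ncard_range_subfun σ)
  rw [Fintype.card_bool] at hMcard
  omega

/-- For any variable order, the sign function of the `n × n` cluster state has at
least `2^⌊n/12⌋` distinct subfunctions of order `⌊n²/2⌋`. -/
theorem cluster_state_many_subfunctions (n : ℕ) (hn : 1 ≤ n)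
    (σ : Fin (n ^ 2) ≃ (Fin n × Fin n)) :
    2 ^ (n / 12) ≤
      Set.ncard {h : (Fin (n ^ 2 - n ^ 2 / 2) → Bool) → ℂ |
        ∃ a : Fin (n ^ 2 / 2) → Bool,
          h = subfun (fun x : Fin (n ^ 2) → Bool =>
              (-1 : ℂ) ^ Set.ncard {e ∈ (gridGraph n).edgeSet |
                ∀ v ∈ e, x (σ.symm v) = true})
            (n ^ 2 / 2) a} := by
  have hhalf := div_two_mul_self_le_sq_div_two n
  simp only [eq_comm (b := subfun _ _ _)]
  exact (Nat.pow_le_pow_right two_pos (by omega)).trans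
    (cluster_state_many_subfunctions_general hn σ hhalf (by omega))
end
end
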